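/- arXiv:2006.05624 — 2 statements merged into one kernel-verified Lean document; each statement's English description precedes it below -/
import Mathlib

section
/- Let D(x) = Σ_i p_i(x)·(log p_i(x) − log q_i(x)), where each p_i and q_i is twice continuously differentiable on ℝ, p_i(x) > 0 and q_i(x) > 0 for every i and every x, Σ_i p_i(x) = 1 and Σ_i q_i(x) = 1 for all x, and suppose p_i(x₀) = q_i(x₀) for every i at a point x₀. Then the second derivative of D at x₀ equals Σ_i p_i(x₀)·( p_i′(x₀)/p_i(x₀) − q_i′(x₀)/q_i(x₀) )², i.e. Σ_i p_i(x₀)·( (log∘p_i)′(x₀) − (log∘q_i)′(x₀) )². This is the induced L₂ penalty, on parameters shared between the two networks, of the adjoint loss. -/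
open Real Finset

/-!
Since `∑ i, p i = ∑ i, q i`, the divergence is also `∑ i, q i * klFun (p i / q i)`, and
`klFun u = u * log u + 1 - u` vanishes together with its derivative at `u = 1`, where its second
derivative is `1`. Every ratio `p i / q i` is `1` at `x₀`, so the only part of the second derivative
that survives is `∑ i, q i * ((p i / q i)') ^ 2`; and where a ratio is `1`, its derivative is its
logarithmic derivative `p' / p - q' / q`.
-/

open InformationTheory Filter Topology

section SecondDerivative

variable {𝕜 : Type*} [NontriviallyNormedField 𝕜] {x : 𝕜}

theorem iteratedDeriv_two_mul_of_eq_zero_of_deriv_eq_zero {𝔸 : Type*} [NormedRing 𝔸]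
    [NormedAlgebra 𝕜 𝔸] {f g : 𝕜 → 𝔸} (hf : ContDiffAt 𝕜 2 f x) (hg : ContDiffAt 𝕜 2 g x)
    (hgx : g x = 0) (hg'x : deriv g x = 0) :
    iteratedDeriv 2 (f * g) x = f x * iteratedDeriv 2 g x := by
  simp [iteratedDeriv_mul hf hg, sum_range_succ, hgx, hg'x]

variable {f g φ : 𝕜 → 𝕜}

theorem deriv_div_eq_logDeriv_sub_logDeriv (hf : DifferentiableAt 𝕜 f x)
    (hg : DifferentiableAt 𝕜 g x) (hgx : g x ≠ 0) (hfg : f x = g x) :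
    deriv (f / g) x = logDeriv f x - logDeriv g x := by
  calc deriv (f / g) x = logDeriv (f / g) x := by
        rw [logDeriv_apply, Pi.div_apply, hfg, div_self hgx, div_one]
    _ = logDeriv f x - logDeriv g x := logDeriv_div x (hfg ▸ hgx) hgx hf hg

theorem iteratedDeriv_two_mul_comp_div (hφ : ContDiffAt 𝕜 2 φ 1) (hφ₁ : φ 1 = 0)
    (hφ'₁ : deriv φ 1 = 0) (hf : ContDiffAt 𝕜 2 f x) (hg : ContDiffAt 𝕜 2 g x)
    (hgx : g x ≠ 0) (hfg : f x = g x) :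
    iteratedDeriv 2 (g * φ ∘ (f / g)) x =
      g x * (iteratedDeriv 2 φ 1 * (logDeriv f x - logDeriv g x) ^ 2) := by
  have hratio : (f / g) x = 1 := by rw [Pi.div_apply, hfg, div_self hgx]
  have hdiv : ContDiffAt 𝕜 2 (f / g) x := hf.div hg hgx
  have hdf : DifferentiableAt 𝕜 f x := hf.differentiableAt two_ne_zero
  have hdg : DifferentiableAt 𝕜 g x := hg.differentiableAt two_ne_zero
  rw [← hratio] at hφ hφ₁ hφ'₁
  have hcomp' : deriv (φ ∘ (f / g)) x = 0 := by
    rw [deriv_comp x (hφ.differentiableAt two_ne_zero) (hdiv.differentiableAt two_ne_zero), hφ'₁,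
      zero_mul]
  rw [iteratedDeriv_two_mul_of_eq_zero_of_deriv_eq_zero hg (hφ.comp x hdiv) hφ₁ hcomp',
    iteratedDeriv_comp_two hφ hdiv, hφ'₁, zero_mul, add_zero, hratio,
    deriv_div_eq_logDeriv_sub_logDeriv hdf hdg hgx hfg]

end SecondDerivative

theorem contDiffAt_klFun {x : ℝ} {n : WithTop ℕ∞} (hx : x ≠ 0) : ContDiffAt ℝ n klFun x :=
  ((contDiffAt_id.mul (contDiffAt_log.2 hx)).add contDiffAt_const).sub contDiffAt_id

theorem iteratedDeriv_two_klFun (x : ℝ) : iteratedDeriv 2 klFun x = x⁻¹ := by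
  rw [iteratedDeriv_succ, iteratedDeriv_one, deriv_klFun, deriv_log]

theorem mul_log_sub_log_eq_mul_klFun_div_add_sub {a b : ℝ} (ha : a ≠ 0) (hb : b ≠ 0) :
    a * (log a - log b) = b * klFun (a / b) + (a - b) := by
  rw [klFun_apply, log_div ha hb]
  field_simp
  ring

theorem sum_mul_log_sub_log_eq_sum_mul_klFun_div {ι : Type*} {s : Finset ι} {a b : ι → ℝ}
    (ha : ∀ i ∈ s, a i ≠ 0) (hb : ∀ i ∈ s, b i ≠ 0) (hab : ∑ i ∈ s, a i = ∑ i ∈ s, b i) :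
    ∑ i ∈ s, a i * (log (a i) - log (b i)) = ∑ i ∈ s, b i * klFun (a i / b i) := by
  rw [sum_congr rfl fun i hi => mul_log_sub_log_eq_mul_klFun_div_add_sub (ha i hi) (hb i hi),
    sum_add_distrib, sum_sub_distrib, hab, sub_self, add_zero]

section KullbackLeibler

variable {ι : Type*} {s : Finset ι} {p q : ι → ℝ → ℝ} {x₀ : ℝ}

theorem sum_mul_log_sub_log_eventuallyEq_sum_mul_klFun_div
    (hp : ∀ i ∈ s, ContinuousAt (p i) x₀) (hq : ∀ i ∈ s, ContinuousAt (q i) x₀)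
    (hp₀ : ∀ i ∈ s, p i x₀ ≠ 0) (hq₀ : ∀ i ∈ s, q i x₀ ≠ 0)
    (hsum : ∀ᶠ t in 𝓝 x₀, ∑ i ∈ s, p i t = ∑ i ∈ s, q i t) :
    (fun t => ∑ i ∈ s, p i t * (log (p i t) - log (q i t))) =ᶠ[𝓝 x₀]
      fun t => ∑ i ∈ s, (q i * klFun ∘ (p i / q i)) t := by
  have hp_ne : ∀ᶠ t in 𝓝 x₀, ∀ i ∈ s, p i t ≠ 0 :=
    (eventually_all_finset s).2 fun i hi => (hp i hi).eventually_ne (hp₀ i hi)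
  have hq_ne : ∀ᶠ t in 𝓝 x₀, ∀ i ∈ s, q i t ≠ 0 :=
    (eventually_all_finset s).2 fun i hi => (hq i hi).eventually_ne (hq₀ i hi)
  filter_upwards [hp_ne, hq_ne, hsum] with t hpt hqt hsum_t
  exact sum_mul_log_sub_log_eq_sum_mul_klFun_div hpt hqt hsum_t

theorem iteratedDeriv_two_sum_mul_klFun_div
    (hp : ∀ i ∈ s, ContDiffAt ℝ 2 (p i) x₀) (hq : ∀ i ∈ s, ContDiffAt ℝ 2 (q i) x₀)
    (hq₀ : ∀ i ∈ s, q i x₀ ≠ 0) (hagree : ∀ i ∈ s, p i x₀ = q i x₀) :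
    iteratedDeriv 2 (fun t => ∑ i ∈ s, (q i * klFun ∘ (p i / q i)) t) x₀ =
      ∑ i ∈ s, q i x₀ * (logDeriv (p i) x₀ - logDeriv (q i) x₀) ^ 2 := by
  have hterm : ∀ i ∈ s, ContDiffAt ℝ 2 (q i * klFun ∘ (p i / q i)) x₀ := fun i hi =>
    (hq i hi).mul <| (contDiffAt_klFun <| div_ne_zero (hagree i hi ▸ hq₀ i hi) (hq₀ i hi)).comp x₀
      ((hp i hi).div (hq i hi) (hq₀ i hi))
  rw [iteratedDeriv_fun_sum hterm]
  refine sum_congr rfl fun i hi => ?_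
  have hklFun'₁ : deriv klFun 1 = 0 := by rw [deriv_klFun, log_one]
  rw [iteratedDeriv_two_mul_comp_div (contDiffAt_klFun one_ne_zero) klFun_one hklFun'₁ (hp i hi)
    (hq i hi) (hq₀ i hi) (hagree i hi), iteratedDeriv_two_klFun, inv_one, one_mul]

theorem adjoint_kl_induced_penalty_shared_general
    (hp : ∀ i ∈ s, ContDiffAt ℝ 2 (p i) x₀) (hq : ∀ i ∈ s, ContDiffAt ℝ 2 (q i) x₀)
    (hpos : ∀ i ∈ s, 0 < p i x₀) (hagree : ∀ i ∈ s, p i x₀ = q i x₀)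
    (hsum : ∀ᶠ t in 𝓝 x₀, ∑ i ∈ s, p i t = ∑ i ∈ s, q i t) :
    deriv (deriv fun t => ∑ i ∈ s, p i t * (log (p i t) - log (q i t))) x₀ =
      ∑ i ∈ s, p i x₀ * (deriv (p i) x₀ / p i x₀ - deriv (q i) x₀ / q i x₀) ^ 2 ∧
    deriv (deriv fun t => ∑ i ∈ s, p i t * (log (p i t) - log (q i t))) x₀ =
      ∑ i ∈ s, p i x₀ * (deriv (log ∘ p i) x₀ - deriv (log ∘ q i) x₀) ^ 2 := by
  have hp₀ : ∀ i ∈ s, p i x₀ ≠ 0 := fun i hi => (hpos i hi).ne'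
  have hq₀ : ∀ i ∈ s, q i x₀ ≠ 0 := fun i hi => hagree i hi ▸ hp₀ i hi
  have hkl : deriv (deriv fun t => ∑ i ∈ s, p i t * (log (p i t) - log (q i t))) x₀ =
      ∑ i ∈ s, p i x₀ * (logDeriv (p i) x₀ - logDeriv (q i) x₀) ^ 2 := by
    rw [← iteratedDeriv_one, ← iteratedDeriv_succ',
      (sum_mul_log_sub_log_eventuallyEq_sum_mul_klFun_div (fun i hi => (hp i hi).continuousAt)
        (fun i hi => (hq i hi).continuousAt) hp₀ hq₀ hsum).iteratedDeriv_eq,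
      iteratedDeriv_two_sum_mul_klFun_div hp hq hq₀ hagree]
    exact sum_congr rfl fun i hi => by rw [hagree i hi]
  refine ⟨hkl, hkl.trans <| sum_congr rfl fun i hi => ?_⟩
  rw [deriv_log_comp_eq_logDeriv ((hp i hi).differentiableAt two_ne_zero) (hp₀ i hi),
    deriv_log_comp_eq_logDeriv ((hq i hi).differentiableAt two_ne_zero) (hq₀ i hi)]

end KullbackLeibler

theorem adjoint_kl_induced_penalty_shared
    (n : ℕ) (hn : 0 < n) (p q : Fin n → ℝ → ℝ) (x₀ : ℝ)
    (hp : ∀ i, ContDiff ℝ 2 (p i))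
    (hq : ∀ i, ContDiff ℝ 2 (q i))
    (hppos : ∀ i x, 0 < p i x) (hqpos : ∀ i x, 0 < q i x)
    (hpsum : ∀ x, ∑ i, p i x = 1) (hqsum : ∀ x, ∑ i, q i x = 1)
    (hagree : ∀ i, p i x₀ = q i x₀)
    (D : ℝ → ℝ)
    (hD : D = fun t => ∑ i, p i t * (Real.log (p i t) - Real.log (q i t))) :
    deriv (deriv D) x₀ =
      ∑ i, p i x₀ * (deriv (p i) x₀ / p i x₀ - deriv (q i) x₀ / q i x₀) ^ 2 ∧
    deriv (deriv D) x₀ =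
      ∑ i, p i x₀ * (deriv (Real.log ∘ p i) x₀ - deriv (Real.log ∘ q i) x₀) ^ 2 :=
  hD ▸ adjoint_kl_induced_penalty_shared_general (fun i _ => (hp i).contDiffAt)
    (fun i _ => (hq i).contDiffAt) (fun i _ => hppos i x₀) (fun i _ => hagree i)
    (.of_forall fun t => (hpsum t).trans (hqsum t).symm)
end

section
/- Let c : Fin n → ℝ be a fixed vector with c_i > 0 for every i, and let D(y) = Σ_i p_i(y)·(log p_i(y) − log c_i), where each p_i is twice continuously differentiable on ℝ, p_i(y) > 0 for every i and every y, Σ_i p_i(y) = 1 for all y, and suppose p_i(y₀) = c_i for every i at a point y₀. Then the second derivative of D at y₀ equals Σ_i p_i′(y₀)²/p_i(y₀), i.e. Σ_i p_i(y₀)·((log∘p_i)′(y₀))². This is the induced L₂ penalty, on parameters of the larger network not shared with the smaller network, of the adjoint loss. -/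
open Real Finset

/-!
Since `(u * (log u - a))'' = u'' * (log u - a + 1) + u' ^ 2 / u`, the choice `a = log u(y₀)` leaves
`u'' + u' ^ 2 / u` at `y₀`. Summed over the outputs, the terms `u''` cancel because the total mass
is constant, and what remains is the Fisher information of the family at `y₀`.
-/

lemma hasDerivAt_mul_log_sub_const {f : ℝ → ℝ} {f' x : ℝ} (a : ℝ)
    (hf : HasDerivAt f f' x) (hx : f x ≠ 0) :
    HasDerivAt (fun t => f t * (log (f t) - a)) (f' * (log (f x) - a + 1)) x := by
  refine (hf.mul ((hf.log hx).sub_const a)).congr_deriv ?_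
  field_simp

lemma iteratedDeriv_two_mul_log_sub_const {f : ℝ → ℝ} {x : ℝ} (a : ℝ)
    (hf : ContDiffAt ℝ 2 f x) (hx : f x ≠ 0) :
    iteratedDeriv 2 (fun t => f t * (log (f t) - a)) x =
      iteratedDeriv 2 f x * (log (f x) - a + 1) + deriv f x ^ 2 / f x := by
  have hfirst : deriv (fun t => f t * (log (f t) - a)) =ᶠ[nhds x]
      fun t => deriv f t * (log (f t) - a + 1) := by
    filter_upwards [hf.eventually (by simp), hf.continuousAt.eventually_ne hx] with t ht htne
    exact (hasDerivAt_mul_log_sub_const a (ht.differentiableAt two_ne_zero).hasDerivAt htne).deriv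
  have hf' : HasDerivAt f (deriv f x) x := (hf.differentiableAt two_ne_zero).hasDerivAt
  have hf'' : HasDerivAt (deriv f) (deriv (deriv f) x) x :=
    ((hf.derivWithin (m := 1) (by norm_num)).differentiableAt one_ne_zero).hasDerivAt
  simp only [iteratedDeriv_succ, iteratedDeriv_zero]
  rw [hfirst.deriv_eq, (hf''.fun_mul (((hf'.log hx).sub_const a).add_const 1)).deriv]
  ring

lemma mul_deriv_log_comp_sq {f : ℝ → ℝ} {x : ℝ} (hf : DifferentiableAt ℝ f x) (hx : f x ≠ 0) :
    f x * deriv (log ∘ f) x ^ 2 = deriv f x ^ 2 / f x := by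
  rw [deriv_log_comp_eq_logDeriv hf hx, logDeriv_apply]
  field_simp

lemma iteratedDeriv_two_sum_mul_log_sub {ι : Type*} {s : Finset ι} {p : ι → ℝ → ℝ} {x : ℝ}
    (a : ι → ℝ) (hp : ∀ i ∈ s, ContDiffAt ℝ 2 (p i) x) (hp0 : ∀ i ∈ s, p i x ≠ 0) :
    iteratedDeriv 2 (fun t => ∑ i ∈ s, p i t * (log (p i t) - a i)) x =
      ∑ i ∈ s, iteratedDeriv 2 (p i) x * (log (p i x) - a i + 1) +
        ∑ i ∈ s, deriv (p i) x ^ 2 / p i x := by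
  rw [iteratedDeriv_fun_sum fun i hi =>
      (hp i hi).mul (((hp i hi).log (hp0 i hi)).sub contDiffAt_const), ← sum_add_distrib]
  exact sum_congr rfl fun i hi => iteratedDeriv_two_mul_log_sub_const (a i) (hp i hi) (hp0 i hi)

lemma sum_iteratedDeriv_eq_zero_of_eventually_sum_eq {𝕜 F ι : Type*} [NontriviallyNormedField 𝕜]
    [NormedAddCommGroup F] [NormedSpace 𝕜 F] {s : Finset ι} {f : ι → 𝕜 → F} {x : 𝕜} {b : F}
    {k : ℕ} (hk : k ≠ 0) (hf : ∀ i ∈ s, ContDiffAt 𝕜 k (f i) x)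
    (hsum : ∀ᶠ y in nhds x, ∑ i ∈ s, f i y = b) :
    ∑ i ∈ s, iteratedDeriv k (f i) x = 0 := by
  rw [← iteratedDeriv_fun_sum hf, Filter.EventuallyEq.iteratedDeriv_eq k hsum,
    iteratedDeriv_const, if_neg hk]

theorem adjoint_kl_induced_penalty_unshared_general {ι : Type*} [Fintype ι]
    {p : ι → ℝ → ℝ} {c : ι → ℝ} {y₀ m : ℝ}
    (hp : ∀ i, ContDiffAt ℝ 2 (p i) y₀) (hpos : ∀ i, 0 < p i y₀)
    (hsum : ∀ᶠ y in nhds y₀, ∑ i, p i y = m) (hagree : ∀ i, p i y₀ = c i) {D : ℝ → ℝ}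
    (hD : D = fun t => ∑ i, p i t * (log (p i t) - log (c i))) :
    deriv (deriv D) y₀ = ∑ i, deriv (p i) y₀ ^ 2 / p i y₀ ∧
    deriv (deriv D) y₀ = ∑ i, p i y₀ * deriv (log ∘ p i) y₀ ^ 2 := by
  have hp0 : ∀ i, p i y₀ ≠ 0 := fun i => (hpos i).ne'
  have hsecond : deriv (deriv D) y₀ = ∑ i, deriv (p i) y₀ ^ 2 / p i y₀ := calc
    deriv (deriv D) y₀ = iteratedDeriv 2 D y₀ := by
      rw [iteratedDeriv_succ, iteratedDeriv_one]
    _ = ∑ i, iteratedDeriv 2 (p i) y₀ + ∑ i, deriv (p i) y₀ ^ 2 / p i y₀ := by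
      rw [hD, iteratedDeriv_two_sum_mul_log_sub (fun i => log (c i)) (fun i _ => hp i)
        fun i _ => hp0 i]
      simp only [hagree, sub_self, zero_add, mul_one]
    _ = ∑ i, deriv (p i) y₀ ^ 2 / p i y₀ := by
      rw [sum_iteratedDeriv_eq_zero_of_eventually_sum_eq two_ne_zero (fun i _ => hp i) hsum,
        zero_add]
  refine ⟨hsecond, hsecond.trans (sum_congr rfl fun i _ => ?_)⟩
  exact (mul_deriv_log_comp_sq ((hp i).differentiableAt two_ne_zero) (hp0 i)).symm

theorem adjoint_kl_induced_penalty_unshared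
    (n : ℕ) (hn : 0 < n) (p : Fin n → ℝ → ℝ) (c : Fin n → ℝ) (y₀ : ℝ)
    (hc : ∀ i, 0 < c i)
    (hp : ∀ i, ContDiff ℝ 2 (p i))
    (hppos : ∀ i y, 0 < p i y)
    (hpsum : ∀ y, ∑ i, p i y = 1)
    (hagree : ∀ i, p i y₀ = c i)
    (D : ℝ → ℝ)
    (hD : D = fun t => ∑ i, p i t * (Real.log (p i t) - Real.log (c i))) :
    deriv (deriv D) y₀ = ∑ i, (deriv (p i) y₀) ^ 2 / p i y₀ ∧
    deriv (deriv D) y₀ = ∑ i, p i y₀ * (deriv (Real.log ∘ p i) y₀) ^ 2 :=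
  adjoint_kl_induced_penalty_unshared_general (fun i => (hp i).contDiffAt) (fun i => hppos i y₀)
    (.of_forall hpsum) hagree hD
end
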